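/- arXiv:2205.04397 — 2 statements merged into one kernel-verified Lean document; each statement's English description precedes it below -/
import Mathlib

section
/- Let H and K be complex Hilbert spaces, B : H → H a bounded self-adjoint operator, and Π : K → H a bounded operator. Let z ∈ ℂ be such that 1 - z·B is invertible (hence so is 1 - z̄·B). Define S_w := (1 - w·B)⁻¹ ∘ Π and N(w) := w · Π* ∘ (1 - w·B)⁻¹ ∘ Π. Then (N(z))* = N(z̄), and the imaginary part of N(z) satisfies (1/(2i))·(N(z) - (N(z))*) = (Im z) · (S_{z̄})* ∘ S_{z̄}. -/
open ContinuousLinearMap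

/-!
With `R(w) = (1 - wB)⁻¹`, the resolvent identity reads `z R(z) - w R(w) = (z - w) R(z) R(w)`.
Multiplied by `Π*` on the left and by `Π` on the right, it gives
`N(z) - N(w) = (z - w) (S_{z̄})* S_w` for self-adjoint `B`. Since `N(z)* = N(z̄)`, the choice
`w = z̄` gives the imaginary part.
-/

section OneSubSMul

variable {𝕜 A : Type*}

theorem smul_inverse_one_sub_smul_sub [CommRing 𝕜] [Ring A] [Algebra 𝕜 A] {b : A} {z w : 𝕜}
    (hz : IsUnit (1 - z • b)) (hw : IsUnit (1 - w • b)) :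
    z • Ring.inverse (1 - z • b) - w • Ring.inverse (1 - w • b) =
      (z - w) • (Ring.inverse (1 - z • b) * Ring.inverse (1 - w • b)) := by
  have pencil : z • (1 - w • b) - w • (1 - z • b) = (z - w) • (1 : A) := by
    module
  calc z • Ring.inverse (1 - z • b) - w • Ring.inverse (1 - w • b)
      = z • (Ring.inverse (1 - z • b) * ((1 - w • b) * Ring.inverse (1 - w • b))) -
          w • (Ring.inverse (1 - z • b) * (1 - z • b) * Ring.inverse (1 - w • b)) := by
        rw [Ring.mul_inverse_cancel _ hw, Ring.inverse_mul_cancel _ hz, mul_one, one_mul]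
    _ = Ring.inverse (1 - z • b) * (z • (1 - w • b) - w • (1 - z • b)) *
          Ring.inverse (1 - w • b) := by
        simp only [mul_sub (Ring.inverse _), sub_mul _ _ (Ring.inverse _), mul_smul_comm,
          smul_mul_assoc, mul_assoc]
    _ = (z - w) • (Ring.inverse (1 - z • b) * Ring.inverse (1 - w • b)) := by
        rw [pencil, mul_smul_comm, mul_one, smul_mul_assoc]

theorem star_one_sub_smul [Star 𝕜] [Ring A] [StarRing A] [SMul 𝕜 A] [StarModule 𝕜 A]
    (z : 𝕜) (b : A) : star (1 - z • b) = 1 - star z • star b := by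
  rw [star_sub, star_one, star_smul]

end OneSubSMul

section MFunction

variable {𝕜 H K : Type*} [RCLike 𝕜]
  [NormedAddCommGroup H] [InnerProductSpace 𝕜 H] [NormedAddCommGroup K] [InnerProductSpace 𝕜 K]

/-- The solution operator `S_w = (1 - wB)⁻¹ Π`, which is `0` when `1 - wB` is not invertible. -/
noncomputable def solutionOperator (B : H →L[𝕜] H) (Pi : K →L[𝕜] H) (w : 𝕜) : K →L[𝕜] H :=
  Ring.inverse (1 - w • B) ∘L Pi

variable [CompleteSpace H] [CompleteSpace K]

/-- The part `N(w) = w Π* (1 - wB)⁻¹ Π` of the M-function `M(w) = Λ + N(w)` that depends on the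
spectral parameter; it is `0` when `1 - wB` is not invertible. -/
noncomputable def reducedMFunction (B : H →L[𝕜] H) (Pi : K →L[𝕜] H) (w : 𝕜) : K →L[𝕜] K :=
  w • (adjoint Pi ∘L Ring.inverse (1 - w • B) ∘L Pi)

theorem adjoint_inverse_one_sub_smul (B : H →L[𝕜] H) (w : 𝕜) :
    adjoint (Ring.inverse (1 - w • B)) = Ring.inverse (1 - starRingEnd 𝕜 w • adjoint B) := by
  simp only [← star_eq_adjoint, starRingEnd_apply, ← star_one_sub_smul, Ring.inverse_star]

theorem adjoint_solutionOperator (B : H →L[𝕜] H) (Pi : K →L[𝕜] H) (w : 𝕜) :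
    adjoint (solutionOperator B Pi w) =
      adjoint Pi ∘L Ring.inverse (1 - starRingEnd 𝕜 w • adjoint B) := by
  rw [solutionOperator, adjoint_comp, adjoint_inverse_one_sub_smul]

theorem adjoint_reducedMFunction (B : H →L[𝕜] H) (Pi : K →L[𝕜] H) (w : 𝕜) :
    adjoint (reducedMFunction B Pi w) = reducedMFunction (adjoint B) Pi (starRingEnd 𝕜 w) := by
  rw [reducedMFunction, reducedMFunction, map_smulₛₗ, adjoint_comp, adjoint_comp, adjoint_adjoint,
    adjoint_inverse_one_sub_smul, comp_assoc]

theorem reducedMFunction_sub {B : H →L[𝕜] H} (Pi : K →L[𝕜] H) {z w : 𝕜}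
    (hz : IsUnit (1 - z • B)) (hw : IsUnit (1 - w • B)) :
    reducedMFunction B Pi z - reducedMFunction B Pi w =
      (z - w) • (adjoint (solutionOperator (adjoint B) Pi (starRingEnd 𝕜 z)) ∘L
        solutionOperator B Pi w) := by
  calc reducedMFunction B Pi z - reducedMFunction B Pi w
      = adjoint Pi ∘L
          (z • Ring.inverse (1 - z • B) - w • Ring.inverse (1 - w • B)) ∘L Pi := by
        simp only [reducedMFunction, sub_comp, comp_sub, smul_comp, comp_smul]
    _ = (z - w) • (adjoint Pi ∘L
          (Ring.inverse (1 - z • B) ∘L Ring.inverse (1 - w • B)) ∘L Pi) := by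
        rw [smul_inverse_one_sub_smul_sub hz hw, smul_comp, comp_smul, mul_def]
    _ = (z - w) • (adjoint (solutionOperator (adjoint B) Pi (starRingEnd 𝕜 z)) ∘L
          solutionOperator B Pi w) := by
        rw [adjoint_solutionOperator, adjoint_adjoint, starRingEnd_self_apply, solutionOperator]
        simp only [comp_assoc]

end MFunction

/-- For bounded self-adjoint `B` on `H` and bounded `Π : K → H`, with
`S_w := (1 - wB)⁻¹ Π` and `N(w) := w Π*(1 - wB)⁻¹Π`, one has `(N(z))* = N(z̄)` and
`Im N(z) := (1/(2i))(N(z) - N(z)*) = (Im z) (S_{z̄})* S_{z̄}`. -/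
theorem M_function_adjoint_and_imaginary_part
    {H K : Type*} [NormedAddCommGroup H] [InnerProductSpace ℂ H] [CompleteSpace H]
    [NormedAddCommGroup K] [InnerProductSpace ℂ K] [CompleteSpace K]
    (B : H →L[ℂ] H) (hB : IsSelfAdjoint B) (Pi : K →L[ℂ] H) (z : ℂ)
    (hz : IsUnit (1 - z • B)) :
    adjoint (z • (adjoint Pi ∘L Ring.inverse (1 - z • B) ∘L Pi))
        = (starRingEnd ℂ z) •
            (adjoint Pi ∘L Ring.inverse (1 - (starRingEnd ℂ z) • B) ∘L Pi) ∧
    (1 / (2 * Complex.I)) •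
        (z • (adjoint Pi ∘L Ring.inverse (1 - z • B) ∘L Pi)
          - adjoint (z • (adjoint Pi ∘L Ring.inverse (1 - z • B) ∘L Pi)))
      = (z.im : ℂ) •
          (adjoint (Ring.inverse (1 - (starRingEnd ℂ z) • B) ∘L Pi)
            ∘L (Ring.inverse (1 - (starRingEnd ℂ z) • B) ∘L Pi)) := by
  have adjoint_N : adjoint (reducedMFunction B Pi z) =
      reducedMFunction B Pi (starRingEnd ℂ z) := by
    rw [adjoint_reducedMFunction, hB.adjoint_eq]
  have hz_conj : IsUnit (1 - starRingEnd ℂ z • B) := by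
    simpa only [star_one_sub_smul, hB.star_eq, starRingEnd_apply] using hz.star
  refine ⟨adjoint_N, ?_⟩
  calc (1 / (2 * Complex.I)) • (reducedMFunction B Pi z - adjoint (reducedMFunction B Pi z))
      = (1 / (2 * Complex.I)) • (z - starRingEnd ℂ z) •
          (adjoint (solutionOperator B Pi (starRingEnd ℂ z)) ∘L
            solutionOperator B Pi (starRingEnd ℂ z)) := by
        rw [adjoint_N, reducedMFunction_sub Pi hz hz_conj, hB.adjoint_eq]
    _ = (z.im : ℂ) •
          (adjoint (solutionOperator B Pi (starRingEnd ℂ z)) ∘L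
            solutionOperator B Pi (starRingEnd ℂ z)) := by
        rw [smul_smul, Complex.im_eq_sub_conj, one_div_mul_eq_div]
end

section
/- Let H and K be complex Hilbert spaces, B : H → H a bounded self-adjoint operator, Π : K → H a bounded operator, Λ : K → K a bounded self-adjoint operator, and P : K → K an orthogonal projection. Suppose c₀ > 0 satisfies ‖Π(Pφ)‖ ≥ c₀‖Pφ‖ for all φ ∈ K. Let z ∈ ℂ with Im z > 0 be such that 1 - z·B is invertible, and set M(z) := Λ + z·Π*(1 - z·B)⁻¹Π. Then there exists a bounded operator J : K → K with J = P ∘ J ∘ P, (P ∘ M(z) ∘ P) ∘ J = P, J ∘ (P ∘ M(z) ∘ P) = P, and ‖J‖ ≤ (1 + |z|‖B‖)² / ((Im z)·c₀²). -/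
open ContinuousLinearMap

/-! With `u = (1 - zB)⁻¹Πφ`, self-adjointness of `Λ` and `B` gives `Im ⟪φ, M(z)φ⟫ = (Im z)‖u‖²`,
while `‖Πφ‖ ≤ (1 + |z|‖B‖)‖u‖`. So the numerical range of `M(z)` over unit vectors of `ran P` stays
at distance at least `(Im z)c₀² / (1 + |z|‖B‖)²` from the origin. By Lax–Milgram, the compression
of `M(z)` to the Hilbert space `ran P` is invertible there, with inverse bounded by the reciprocal
of that distance, and `J` is this inverse extended by zero to `(ran P)ᗮ`. -/

theorem apply_inverse_apply {R E : Type*} [Semiring R] [AddCommMonoid E] [TopologicalSpace E]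
    [Module R E] {A : E →L[R] E} (hA : IsUnit A) (x : E) : A (Ring.inverse A x) = x :=
  DFunLike.congr_fun (Ring.mul_inverse_cancel A hA) x

section NormedSpace

variable {𝕜 E : Type*} [NontriviallyNormedField 𝕜] [SeminormedAddCommGroup E] [NormedSpace 𝕜 E]

theorem norm_inverse_le_of_antilipschitzWith {A : E →L[𝕜] E} {C : NNReal} (hA : IsUnit A)
    (hanti : AntilipschitzWith C A) : ‖Ring.inverse A‖ ≤ C := by
  refine opNorm_le_bound _ C.coe_nonneg fun x ↦ ?_
  simpa only [apply_inverse_apply hA] using A.bound_of_antilipschitz hanti (Ring.inverse A x)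

theorem norm_one_sub_smul_le (z : 𝕜) (B : E →L[𝕜] E) : ‖1 - z • B‖ ≤ 1 + ‖z‖ * ‖B‖ :=
  (norm_sub_le _ _).trans (add_le_add norm_id_le (norm_smul_le z B))

theorem norm_le_mul_norm_inverse_one_sub_smul_apply {z : 𝕜} {B : E →L[𝕜] E}
    (hz : IsUnit (1 - z • B)) (x : E) :
    ‖x‖ ≤ (1 + ‖z‖ * ‖B‖) * ‖Ring.inverse (1 - z • B) x‖ := by
  simpa only [apply_inverse_apply hz] using
    le_of_opNorm_le _ (norm_one_sub_smul_le z B) (Ring.inverse (1 - z • B) x)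

end NormedSpace

section Compression

variable {𝕜 E : Type*} [RCLike 𝕜] [NormedAddCommGroup E] [InnerProductSpace 𝕜 E]
variable (U : Submodule 𝕜 E)

/-- The compression of an operator `T` on `E` to a subspace `U`, as an operator on `U` itself:
the orthogonal projection onto `U` of the restriction of `T` to `U`. -/
noncomputable def compression [U.HasOrthogonalProjection] (T : E →L[𝕜] E) : U →L[𝕜] U :=
  U.orthogonalProjectionOnto ∘L T ∘L U.subtypeL

/-- The extension of an operator on a subspace `U` to the ambient space, by zero on `Uᗮ`. -/
noncomputable def extendByZero [U.HasOrthogonalProjection] (A : U →L[𝕜] U) : E →L[𝕜] E :=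
  U.subtypeL ∘L A ∘L U.orthogonalProjectionOnto

section Projection

variable [U.HasOrthogonalProjection]

theorem extendByZero_one : extendByZero U 1 = U.starProjection :=
  rfl

theorem extendByZero_compression (T : E →L[𝕜] E) :
    extendByZero U (compression U T) = U.starProjection ∘L T ∘L U.starProjection :=
  rfl

theorem extendByZero_mul (A B : U →L[𝕜] U) :
    extendByZero U (A * B) = extendByZero U A ∘L extendByZero U B := by
  ext x
  simp [extendByZero]

theorem extendByZero_eq_starProjection_comp_comp (A : U →L[𝕜] U) :
    extendByZero U A = U.starProjection ∘L extendByZero U A ∘L U.starProjection := by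
  rw [← extendByZero_one, ← extendByZero_mul, ← extendByZero_mul, mul_one, one_mul]

theorem norm_extendByZero_le (A : U →L[𝕜] U) : ‖extendByZero U A‖ ≤ ‖A‖ := by
  refine opNorm_le_bound _ (norm_nonneg A) fun x ↦ ?_
  exact A.le_opNorm_of_le (U.norm_orthogonalProjectionOnto_apply_le x)

theorem starProjection_comp_comp_comp_extendByZero_inverse {T : E →L[𝕜] E}
    (hT : IsUnit (compression U T)) :
    (U.starProjection ∘L T ∘L U.starProjection) ∘L extendByZero U (Ring.inverse (compression U T)) =
      U.starProjection := by
  rw [← extendByZero_compression, ← extendByZero_mul, Ring.mul_inverse_cancel _ hT,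
    extendByZero_one]

theorem extendByZero_inverse_comp_starProjection_comp_comp {T : E →L[𝕜] E}
    (hT : IsUnit (compression U T)) :
    extendByZero U (Ring.inverse (compression U T)) ∘L (U.starProjection ∘L T ∘L U.starProjection) =
      U.starProjection := by
  rw [← extendByZero_compression, ← extendByZero_mul, Ring.inverse_mul_cancel _ hT,
    extendByZero_one]

theorem inner_compression_apply (T : E →L[𝕜] E) (x y : U) :
    inner 𝕜 (compression U T x) y = inner 𝕜 (T x) (y : E) :=
  U.inner_orthogonalProjectionOnto_eq_of_mem_right y (T x)

end Projection

variable {U} [CompleteSpace U] {T : E →L[𝕜] E} {c : ℝ}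

theorem isUnit_compression_of_forall_le_norm_inner (hc : 0 < c)
    (h : ∀ x ∈ U, ‖x‖ ^ 2 * c ≤ ‖inner 𝕜 (T x) x‖) : IsUnit (compression U T) := by
  lift c to NNReal using hc.le
  refine isUnit_of_forall_le_norm_inner_map _ (NNReal.coe_pos.mp hc) fun x ↦ ?_
  simpa only [inner_compression_apply, Submodule.coe_norm] using h x x.2

theorem norm_inverse_compression_le_of_forall_le_norm_inner (hc : 0 < c)
    (h : ∀ x ∈ U, ‖x‖ ^ 2 * c ≤ ‖inner 𝕜 (T x) x‖) : ‖Ring.inverse (compression U T)‖ ≤ c⁻¹ := by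
  have hT : IsUnit (compression U T) := isUnit_compression_of_forall_le_norm_inner hc h
  lift c to NNReal using hc.le
  refine norm_inverse_le_of_antilipschitzWith hT <|
    antilipschitz_of_forall_le_inner_map _ (NNReal.coe_pos.mp hc) fun x ↦ ?_
  simpa only [inner_compression_apply, Submodule.coe_norm] using h x x.2

end Compression

section MFunction

theorem im_mul_inner_one_sub_smul_apply_self {H : Type*} [SeminormedAddCommGroup H]
    [InnerProductSpace ℂ H] {B : H →L[ℂ] H} (hB : (B : H →ₗ[ℂ] H).IsSymmetric) (z : ℂ) (u : H) :
    (z * inner ℂ ((1 - z • B) u) u).im = z.im * ‖u‖ ^ 2 := by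
  have hBu : (inner ℂ (B u) u).im = 0 := hB.im_inner_apply_self u
  have huu : inner ℂ u u = ((‖u‖ ^ 2 : ℝ) : ℂ) := by
    exact_mod_cast inner_self_eq_norm_sq_to_K u
  have hexpand : z * inner ℂ ((1 - z • B) u) u =
      (‖u‖ ^ 2 : ℝ) * z - (Complex.normSq z : ℂ) * inner ℂ (B u) u := by
    change z * inner ℂ (u - z • B u) u = _
    rw [inner_sub_left, inner_smul_left, huu, ← Complex.mul_conj]
    ring
  rw [hexpand, Complex.sub_im, Complex.im_ofReal_mul, Complex.im_ofReal_mul, hBu]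
  ring

variable {H K : Type*} [NormedAddCommGroup H] [InnerProductSpace ℂ H] [CompleteSpace H]
  [NormedAddCommGroup K] [InnerProductSpace ℂ K] [CompleteSpace K]

/-- The `M`-function `M(z) = Λ + z Π*(1 - zB)⁻¹Π` of the transmission problem, where `B` stands for
`A₀⁻¹`. When `1 - zB` is not invertible, the resolvent is read as `0`. -/
noncomputable def mFunction (B : H →L[ℂ] H) (Pi : K →L[ℂ] H) (Λ : K →L[ℂ] K) (z : ℂ) : K →L[ℂ] K :=
  Λ + z • (adjoint Pi ∘L Ring.inverse (1 - z • B) ∘L Pi)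

variable {B : H →L[ℂ] H} {Pi : K →L[ℂ] H} {Λ : K →L[ℂ] K} {z : ℂ}

theorem im_inner_mFunction_apply_self (hB : IsSelfAdjoint B) (hΛ : IsSelfAdjoint Λ)
    (hz : IsUnit (1 - z • B)) (φ : K) :
    (inner ℂ φ (mFunction B Pi Λ z φ)).im = z.im * ‖Ring.inverse (1 - z • B) (Pi φ)‖ ^ 2 := by
  set u := Ring.inverse (1 - z • B) (Pi φ)
  have hΛφ : (inner ℂ φ (Λ φ)).im = 0 := hΛ.isSymmetric.im_inner_self_apply φ
  have hsplit : inner ℂ φ (mFunction B Pi Λ z φ) = inner ℂ φ (Λ φ) + z * inner ℂ (Pi φ) u := by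
    simp [mFunction, adjoint_inner_right, u]
  have hPi : Pi φ = (1 - z • B) u := (apply_inverse_apply hz (Pi φ)).symm
  rw [hsplit, Complex.add_im, hΛφ, zero_add, hPi,
    im_mul_inner_one_sub_smul_apply_self hB.isSymmetric]

theorem le_im_inner_mFunction_apply_self (hB : IsSelfAdjoint B) (hΛ : IsSelfAdjoint Λ)
    (hzim : 0 ≤ z.im) (hz : IsUnit (1 - z • B)) {c : ℝ} (hc : 0 ≤ c) {φ : K}
    (hφ : c * ‖φ‖ ≤ ‖Pi φ‖) :
    ‖φ‖ ^ 2 * (z.im * c ^ 2 / (1 + ‖z‖ * ‖B‖) ^ 2) ≤ (inner ℂ φ (mFunction B Pi Λ z φ)).im := by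
  set u := Ring.inverse (1 - z • B) (Pi φ) with hu
  have hle : c * ‖φ‖ ≤ (1 + ‖z‖ * ‖B‖) * ‖u‖ :=
    hφ.trans (norm_le_mul_norm_inverse_one_sub_smul_apply hz (Pi φ))
  rw [im_inner_mFunction_apply_self hB hΛ hz, ← hu, ← mul_div_assoc, div_le_iff₀ (by positivity)]
  calc ‖φ‖ ^ 2 * (z.im * c ^ 2) = z.im * (c * ‖φ‖) ^ 2 := by ring
    _ ≤ z.im * ((1 + ‖z‖ * ‖B‖) * ‖u‖) ^ 2 := by gcongr
    _ = z.im * ‖u‖ ^ 2 * (1 + ‖z‖ * ‖B‖) ^ 2 := by ring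

end MFunction

/-- For `M(z) := Λ + z Π*(1 - zB)⁻¹Π` with `B`, `Λ` self-adjoint, `P` an
orthogonal projection, `‖Π(Pφ)‖ ≥ c₀‖Pφ‖` and `Im z > 0`, the compression `P M(z) P` is
invertible on the range of `P`: there is a bounded `J` with `J = PJP`,
`(PM(z)P)J = P = J(PM(z)P)` and `‖J‖ ≤ (1 + |z|‖B‖)²/((Im z)c₀²)`. -/
theorem compressed_M_function_invertible
    {H K : Type*} [NormedAddCommGroup H] [InnerProductSpace ℂ H] [CompleteSpace H]
    [NormedAddCommGroup K] [InnerProductSpace ℂ K] [CompleteSpace K]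
    (B : H →L[ℂ] H) (hB : IsSelfAdjoint B) (Pi : K →L[ℂ] H)
    (Λ : K →L[ℂ] K) (hΛ : IsSelfAdjoint Λ)
    (P : K →L[ℂ] K) (hP : IsSelfAdjoint P) (hP2 : P ∘L P = P)
    (c₀ : ℝ) (hc₀ : 0 < c₀) (hPi : ∀ φ : K, c₀ * ‖P φ‖ ≤ ‖Pi (P φ)‖)
    (z : ℂ) (hzim : 0 < z.im) (hz : IsUnit (1 - z • B)) :
    ∃ J : K →L[ℂ] K,
      J = P ∘L J ∘L P ∧
      (P ∘L (Λ + z • (adjoint Pi ∘L Ring.inverse (1 - z • B) ∘L Pi)) ∘L P) ∘L J = P ∧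
      J ∘L (P ∘L (Λ + z • (adjoint Pi ∘L Ring.inverse (1 - z • B) ∘L Pi)) ∘L P) = P ∧
      ‖J‖ ≤ (1 + ‖z‖ * ‖B‖) ^ 2 / (z.im * c₀ ^ 2) := by
  obtain ⟨U, _, rfl⟩ := isStarProjection_iff_eq_starProjection.mp ⟨hP2, hP⟩
  have : CompleteSpace U := U.isTopCompl_orthogonal.isClosed.completeSpace_coe
  set M := mFunction B Pi Λ z
  set κ := z.im * c₀ ^ 2 / (1 + ‖z‖ * ‖B‖) ^ 2 with hκ
  have hκ_pos : 0 < κ := by positivity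
  have hM : ∀ φ ∈ U, ‖φ‖ ^ 2 * κ ≤ ‖inner ℂ (M φ) φ‖ := fun φ hφ ↦ by
    have hPiφ : c₀ * ‖φ‖ ≤ ‖Pi φ‖ := by
      simpa only [Submodule.starProjection_eq_self_iff.mpr hφ] using hPi φ
    rw [norm_inner_symm]
    exact (le_im_inner_mFunction_apply_self hB hΛ hzim.le hz hc₀.le hPiφ).trans
      (Complex.im_le_norm _)
  have hA : IsUnit (compression U M) := isUnit_compression_of_forall_le_norm_inner hκ_pos hM
  refine ⟨extendByZero U (Ring.inverse (compression U M)),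
    extendByZero_eq_starProjection_comp_comp U _,
    starProjection_comp_comp_comp_extendByZero_inverse U hA,
    extendByZero_inverse_comp_starProjection_comp_comp U hA, ?_⟩
  rw [← inv_div, ← hκ]
  exact (norm_extendByZero_le U _).trans
    (norm_inverse_compression_le_of_forall_le_norm_inner hκ_pos hM)
end
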